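/- arXiv:1004.2848 — 3 statements merged into one kernel-verified Lean document; each statement's English description precedes it below -/
import Mathlib

section
/- Fix α > 0. Define u₀, u₁ : Σ → ℝ by u₀(x) = −d(x,0^∞) and u₁(x) = −3·d(x,1^∞). Then for every y ∈ Σ, u₀(y) = max_{a∈{0,1,2}} (A_α(a·y) + u₀(a·y)) and u₁(y) = max_{a∈{0,1,2}} (A_α(a·y) + u₁(a·y)); that is, u₀ and u₁ are calibrated subactions for A_α (whose maximal ergodic average m(A_α) equals 0). -/
/-!
Prepending `a` halves the distance to `a^∞` (`dist3_cons_self`), while prepending any other symbol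
makes that distance equal to `1`, its largest possible value (`dist3_cons_of_ne`, `dist3_le_one`).
Hence for `u₀` the branch `a = 0` contributes `-d/2 - d/2 = -d` with `d = d(y, 0^∞)`, and the other
two branches contribute a nonpositive potential plus `-1 ≤ -d`, so the maximum is attained at
`a = 0`. The same computation, scaled by `3`, gives `u₁` with the maximum attained at `a = 1`.
-/

open MeasureTheory Filter Topology

noncomputable section

/-- The full shift space `Σ = {0,1,2}^ℕ`. -/
abbrev Sig : Type := ℕ → Fin 3

/-- The shift map `σ`. -/
def shift (x : Sig) : Sig := fun n => x (n + 1)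

/-- The fixed point `0^∞`. -/
def zeroSeq : Sig := fun _ => 0

/-- The fixed point `1^∞`. -/
def oneSeq : Sig := fun _ => 1

/-- Prepending a symbol: `a·x = (a, x₀, x₁, …)`. -/
def cons (a : Fin 3) (x : Sig) : Sig := fun n => Nat.casesOn n a x

open Classical in
/-- The metric `d(x,y) = (1/2)^(min{n : x n ≠ y n})`, with `d(x,x) = 0`. -/
def dist3 (x y : Sig) : ℝ :=
  if h : x ≠ y then (1 / 2 : ℝ) ^ Nat.find (Function.ne_iff.mp h) else 0

/-- The potential `A_α`. -/
def pot (α : ℝ) (x : Sig) : ℝ :=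
  if x 0 = 0 then -dist3 x zeroSeq
  else if x 0 = 1 then -(3 * dist3 x oneSeq)
  else -α

/-- The transfer operator `L_β` (for parameter `α`). -/
def transfer (α β : ℝ) (f : Sig → ℝ) : Sig → ℝ :=
  fun x => ∑ a : Fin 3, Real.exp (β * pot α (cons a x)) * f (cons a x)

/-- The ring `[a^n *_a] = {x : x_i = a for i < n, x_n ≠ a}`. -/
def ringSet (a : Fin 3) (n : ℕ) : Set Sig := {x | (∀ i < n, x i = a) ∧ x n ≠ a}

/-- The cylinder `[a] = {x : x₀ = a}`. -/
def cyl (a : Fin 3) : Set Sig := {x | x 0 = a}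

/-- `H` is locally ring-constant: constant on `[2]` and on each ring `[0^m*₀]`, `[1^m*₁]`. -/
def LocallyRingConstant (H : Sig → ℝ) : Prop :=
  (∀ x ∈ cyl 2, ∀ y ∈ cyl 2, H x = H y) ∧
  (∀ m : ℕ, 1 ≤ m → ∀ x ∈ ringSet 0 m, ∀ y ∈ ringSet 0 m, H x = H y) ∧
  (∀ m : ℕ, 1 ≤ m → ∀ x ∈ ringSet 1 m, ∀ y ∈ ringSet 1 m, H x = H y)

/-- An eigen-measure for `(α,β)` with exponent `P`:  a Borel probability measure `ν`
with `P > 0` and `∫ L_β f dν = e^P ∫ f dν` for every continuous `f`. -/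
structure IsEigenMeasure (α β P : ℝ) (ν : Measure Sig) : Prop where
  P_pos : 0 < P
  prob : IsProbabilityMeasure ν
  eigenMeas : ∀ f : Sig → ℝ, Continuous f →
    ∫ x, transfer α β f x ∂ν = Real.exp P * ∫ x, f x ∂ν

/-- Eigen-data `(P, H, ν)` for `(α,β)`. -/
structure IsEigenData (α β P : ℝ) (H : Sig → ℝ) (ν : Measure Sig) : Prop where
  P_pos : 0 < P
  H_cont : Continuous H
  H_pos : ∀ x, 0 < H x
  eigenFun : ∀ x, transfer α β H x = Real.exp P * H x
  prob : IsProbabilityMeasure ν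
  eigenMeas : ∀ f : Sig → ℝ, Continuous f →
    ∫ x, transfer α β f x ∂ν = Real.exp P * ∫ x, f x ∂ν

/-- The Gibbs measure `μ(B) = (∫_B H dν)/(∫ H dν)`. -/
def gibbs (H : Sig → ℝ) (ν : Measure Sig) : Measure Sig :=
  (ν.withDensity (fun x => ENNReal.ofReal (H x)) Set.univ)⁻¹ •
    ν.withDensity (fun x => ENNReal.ofReal (H x))

/-- Weak convergence (as `β → +∞`) of a family of measures to a measure `μ∞`:
convergence of integrals of every bounded continuous function. -/
def WeakLimit (μ : ℝ → Measure Sig) (μlim : Measure Sig) : Prop :=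
  ∀ f : Sig → ℝ, Continuous f → (∃ C : ℝ, ∀ x, |f x| ≤ C) →
    Tendsto (fun β => ∫ x, f x ∂(μ β)) atTop (nhds (∫ x, f x ∂μlim))

/-- `F(Z,β) = Σ_{k=0}^∞ e^{−kZ}·e^{β/2^{k+1}}`. -/
def Ffun (Z β : ℝ) : ℝ := ∑' k : ℕ, Real.exp (-(k : ℝ) * Z) * Real.exp (β / 2 ^ (k + 1))

/-- `Fpartial Z β m = F_{m-1}(Z,β) = Σ_{k=0}^{m-1} e^{−kZ}·e^{β/2^{k+1}}` (so `Fpartial Z β 0 = F_{-1} = 0`). -/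
def Fpartial (Z β : ℝ) (m : ℕ) : ℝ :=
  ∑ k ∈ Finset.range m, Real.exp (-(k : ℝ) * Z) * Real.exp (β / 2 ^ (k + 1))

theorem dist3_nonneg (x y : Sig) : 0 ≤ dist3 x y := by
  unfold dist3
  split_ifs <;> positivity

theorem dist3_le_one (x y : Sig) : dist3 x y ≤ 1 := by
  unfold dist3
  split_ifs
  · exact pow_le_one₀ (by norm_num) (by norm_num)
  · exact zero_le_one

theorem dist3_cons_of_ne {a b : Fin 3} (hab : a ≠ b) (y : Sig) :
    dist3 (cons a y) (fun _ => b) = 1 := by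
  have h : cons a y ≠ fun _ => b := fun h => hab (congrFun h 0)
  unfold dist3
  rw [dif_pos h, (Nat.find_eq_zero _).2 hab, pow_zero]

/-- The inverse branch fixing `a^∞` halves the distance to `a^∞`. -/
theorem dist3_cons_self (a : Fin 3) (y : Sig) :
    dist3 (cons a y) (fun _ => a) = dist3 y (fun _ => a) / 2 := by
  classical
  by_cases hy : y = fun _ => a
  · have h : cons a y = fun _ => a := by
      funext n
      cases n with
      | zero => rfl
      | succ n => exact congrFun hy n
    rw [h, hy]
    simp [dist3]
  · have h : cons a y ≠ fun _ => a := fun h => hy (funext fun n => congrFun h (n + 1))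
    unfold dist3
    rw [dif_pos h, dif_pos hy,
      Nat.find_comp_succ (Function.ne_iff.mp h) (Function.ne_iff.mp hy) (fun h0 => h0 rfl), pow_succ,
      mul_one_div]
    -- `cons a y (n + 1)` unfolds to `y n`, so the two searches are the same.
    rfl

/-- `u₀(x) = −d(x,0^∞)` and `u₁(x) = −3d(x,1^∞)` are calibrated subactions for `A_α`. -/
theorem calibrated_subactions (α : ℝ) (hα : 0 < α) (y : Sig) :
    (-dist3 y zeroSeq =
      max (pot α (cons 0 y) + -dist3 (cons 0 y) zeroSeq)
        (max (pot α (cons 1 y) + -dist3 (cons 1 y) zeroSeq)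
          (pot α (cons 2 y) + -dist3 (cons 2 y) zeroSeq))) ∧
    (-(3 * dist3 y oneSeq) =
      max (pot α (cons 0 y) + -(3 * dist3 (cons 0 y) oneSeq))
        (max (pot α (cons 1 y) + -(3 * dist3 (cons 1 y) oneSeq))
          (pot α (cons 2 y) + -(3 * dist3 (cons 2 y) oneSeq)))) := by
  have z0 : dist3 (cons 0 y) zeroSeq = dist3 y zeroSeq / 2 := dist3_cons_self 0 y
  have o1 : dist3 (cons 1 y) oneSeq = dist3 y oneSeq / 2 := dist3_cons_self 1 y
  have p0 : pot α (cons 0 y) = -(dist3 y zeroSeq / 2) := by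
    rw [← z0]
    simp [pot, cons]
  have p1 : pot α (cons 1 y) = -(3 * (dist3 y oneSeq / 2)) := by
    rw [← o1]
    simp [pot, cons]
  have p2 : pot α (cons 2 y) = -α := by simp [pot, cons]
  have z1 : dist3 (cons 1 y) zeroSeq = 1 := dist3_cons_of_ne (by decide) y
  have z2 : dist3 (cons 2 y) zeroSeq = 1 := dist3_cons_of_ne (by decide) y
  have o0 : dist3 (cons 0 y) oneSeq = 1 := dist3_cons_of_ne (by decide) y
  have o2 : dist3 (cons 2 y) oneSeq = 1 := dist3_cons_of_ne (by decide) y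
  have hz := dist3_nonneg y zeroSeq
  have hz1 := dist3_le_one y zeroSeq
  have ho := dist3_nonneg y oneSeq
  have ho1 := dist3_le_one y oneSeq
  rw [p0, p1, p2, z0, z1, z2, o0, o1, o2]
  constructor
  · rw [max_eq_left (max_le (by linarith) (by linarith))]
    ring
  · rw [max_eq_right (le_max_of_le_left (by linarith)), max_eq_left (by linarith)]
    ring

end
end

section
/- Fix α > 1 and suppose that for every β > 0 eigen-data (P(β), H_β, ν_β) for (α,β) is given. Then (1/β)·log P(β) → −2 as β → +∞. Moreover, if β_j → +∞ and the functions (1/β_j)·log H_{β_j} converge uniformly on Σ to a function V : Σ → ℝ, then V(1^∞) = V(0^∞) + 1. -/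
/-!
The eigenmeasure plays no role; everything follows from the eigenfunction `H` and `λ = e^P > 1`.

Two points of a common ring have the same Birkhoff sums along every common pull-back, and `log H`
is uniformly continuous, so `H` is constant on `[2]` and on the rings around the fixed points
(`eq_of_sameRing`). The eigenfunction equation thus becomes a scalar recursion along each of the
two towers of rings, with limits `H(0^∞)` and `H(1^∞)`. Bounding its solution (`tower_bounds`)
leaves a two-dimensional system (`exists_reduced`) for `r = H(1^∞)/H(0^∞)`:
`(1 - t) r = u + t` and `1 - t = (v + t) r`, where `0 < t ≤ e^{-αβ}` and, with `s = 1/(λ - 1)`,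

* `e^{-β} s ≤ u ≤ e^{-β} (M e^{β/2} + e^{o_M(β)} s)`,
* `e^{-3β} s ≤ v ≤ e^{-3β} (M e^{3β/2} + e^{o_M(β)} s)`,

the exponents `o_M(β)` being arbitrarily small multiples of `β` for large depth `M`.
Multiplying the equations gives `u v ≤ 1`, so `s ≤ e^{2β}`. Then `v + t` is at most about `e^{-β}`
because `3/2 > 1` and `α > 1`, so `r` is at least about `e^β`, which forces `u` to be at least about
`e^β` and `s` about `e^{2β}` (`Reduced.bounds`). Hence `log r ~ β` and `log P ~ log (λ - 1) ~ -2β`.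
-/

open MeasureTheory Filter Topology

noncomputable section

/-! ### Rings and ring-constancy of eigenfunctions -/

lemma dist3_of_ringSet {a : Fin 3} {n : ℕ} {x : Sig} (hx : x ∈ ringSet a n) :
    dist3 x (fun _ => a) = (1 / 2 : ℝ) ^ n := by
  obtain ⟨h1, h2⟩ := hx
  have hne : x ≠ (fun _ => a) := fun h => h2 (congrFun h n)
  unfold dist3
  rw [dif_pos hne]
  congr 1
  rw [Nat.find_eq_iff]
  exact ⟨h2, fun m hm => not_not.mpr (h1 m hm)⟩

lemma pot_ring_zero {α : ℝ} {n : ℕ} {x : Sig} (hx : x ∈ ringSet 0 (n + 1)) :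
    pot α x = -(1 / 2 : ℝ) ^ (n + 1) := by
  have h0 : x 0 = 0 := hx.1 0 (Nat.succ_pos n)
  unfold pot zeroSeq
  rw [if_pos h0, dist3_of_ringSet hx]

lemma pot_ring_one {α : ℝ} {n : ℕ} {x : Sig} (hx : x ∈ ringSet 1 (n + 1)) :
    pot α x = -(3 * (1 / 2 : ℝ) ^ (n + 1)) := by
  have h0 : x 0 = 1 := hx.1 0 (Nat.succ_pos n)
  unfold pot oneSeq
  rw [if_neg (by simp [h0]), if_pos h0, dist3_of_ringSet hx]

lemma pot_two {α : ℝ} {x : Sig} (hx : x ∈ cyl 2) : pot α x = -α := by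
  have h0 : x 0 = 2 := hx
  unfold pot
  rw [if_neg (by simp [h0]), if_neg (by simp [h0])]

lemma pot_zeroSeq (α : ℝ) : pot α zeroSeq = 0 := by
  simp [pot, dist3, zeroSeq]

lemma pot_oneSeq (α : ℝ) : pot α oneSeq = 0 := by
  simp [pot, dist3, oneSeq]

lemma cons_const (a : Fin 3) : cons a (fun _ => a) = fun _ => a := by
  funext n
  cases n <;> rfl

lemma cons_mem_ring {a : Fin 3} {n : ℕ} {x : Sig} (hx : x ∈ ringSet a n) :
    cons a x ∈ ringSet a (n + 1) := by
  refine ⟨fun i hi => ?_, hx.2⟩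
  cases i with
  | zero => rfl
  | succ k => exact hx.1 k (by omega)

lemma cons_mem_ring_one {a : Fin 3} {x : Sig} (hx : x 0 ≠ a) :
    cons a x ∈ ringSet a (0 + 1) :=
  cons_mem_ring ⟨fun _ hi => absurd hi (Nat.not_lt_zero _), hx⟩

/-- Two points lie in the same piece of the partition of `Σ ∖ {0^∞, 1^∞}` into the cylinder `[2]`
and the rings `[0^m*₀]`, `[1^m*₁]` with `m ≥ 1`. -/
def SameRing (x y : Sig) : Prop :=
  (x ∈ cyl 2 ∧ y ∈ cyl 2) ∨ (∃ m, x ∈ ringSet 0 (m + 1) ∧ y ∈ ringSet 0 (m + 1)) ∨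
    (∃ m, x ∈ ringSet 1 (m + 1) ∧ y ∈ ringSet 1 (m + 1))

lemma SameRing.pot_eq {α : ℝ} {x y : Sig} (h : SameRing x y) : pot α x = pot α y := by
  rcases h with ⟨hx, hy⟩ | ⟨m, hx, hy⟩ | ⟨m, hx, hy⟩
  · rw [pot_two hx, pot_two hy]
  · rw [pot_ring_zero hx, pot_ring_zero hy]
  · rw [pot_ring_one hx, pot_ring_one hy]

lemma SameRing.cons {x y : Sig} (h : SameRing x y) (a : Fin 3) :
    SameRing (cons a x) (cons a y) := by
  have key : ∀ b c : Fin 3, b ≠ c → x 0 = b → y 0 = b →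
      _root_.cons c x ∈ ringSet c (0 + 1) ∧ _root_.cons c y ∈ ringSet c (0 + 1) :=
    fun b c hbc hx hy => ⟨cons_mem_ring_one (hx ▸ hbc), cons_mem_ring_one (hy ▸ hbc)⟩
  fin_cases a
  · right; left
    rcases h with ⟨hx, hy⟩ | ⟨m, hx, hy⟩ | ⟨m, hx, hy⟩
    · exact ⟨0, key 2 0 (by decide) hx hy⟩
    · exact ⟨m + 1, cons_mem_ring hx, cons_mem_ring hy⟩
    · exact ⟨0, key 1 0 (by decide) (hx.1 0 m.succ_pos) (hy.1 0 m.succ_pos)⟩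
  · right; right
    rcases h with ⟨hx, hy⟩ | ⟨m, hx, hy⟩ | ⟨m, hx, hy⟩
    · exact ⟨0, key 2 1 (by decide) hx hy⟩
    · exact ⟨0, key 0 1 (by decide) (hx.1 0 m.succ_pos) (hy.1 0 m.succ_pos)⟩
    · exact ⟨m + 1, cons_mem_ring hx, cons_mem_ring hy⟩
  · exact Or.inl ⟨rfl, rfl⟩

/-- A continuous positive function on the compact space `Σ` has multiplicative oscillation as
close to `1` as desired on cylinders of large length. -/
lemma exists_cylinder_ratio {H : Sig → ℝ} (hc : Continuous H) (hp : ∀ x, 0 < H x)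
    {K : ℝ} (hK : 1 < K) :
    ∃ n : ℕ, ∀ x y : Sig, (∀ i < n, x i = y i) → H x ≤ K * H y := by
  by_contra! hcon
  choose x y hxy hlt using hcon
  obtain ⟨z, -, φ, hφ, hz⟩ := (isCompact_univ (X := Sig)).tendsto_subseq
    (x := x) (fun _ => Set.mem_univ _)
  have hz' : Tendsto (y ∘ φ) atTop (nhds z) := by
    rw [tendsto_pi_nhds] at hz ⊢
    intro i
    refine (hz i).congr' ?_
    filter_upwards [eventually_gt_atTop i] with n hn
    exact hxy (φ n) i (lt_of_lt_of_le hn (hφ.id_le n))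
  have h1 := (hc.tendsto z).comp hz
  have h2 := ((hc.tendsto z).comp hz').const_mul K
  have h3 : K * H z ≤ H z := le_of_tendsto_of_tendsto' h2 h1 fun n => (hlt (φ n)).le
  nlinarith [hp z]

/-- Pulling back along `n` symbols leaves the Birkhoff sums of the potential equal at two points
of a common ring, so a ratio bound on long cylinders propagates to whole rings. -/
lemma ratio_on_rings {α β lam K : ℝ} {H : Sig → ℝ} (hlam : 0 < lam)
    (hE : ∀ x, transfer α β H x = lam * H x) (n : ℕ)
    (hn : ∀ x y : Sig, (∀ i < n, x i = y i) → H x ≤ K * H y) :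
    ∀ x y, SameRing x y → H x ≤ K * H y := by
  suffices h : ∀ k ≤ n, ∀ x y, SameRing x y → (∀ i < n - k, x i = y i) → H x ≤ K * H y by
    intro x y hxy
    exact h n le_rfl x y hxy (by simp)
  intro k
  induction k with
  | zero => exact fun _ x y _ h => hn x y h
  | succ k ih =>
    intro hk x y hxy h
    have hs : transfer α β H x ≤ K * transfer α β H y := by
      unfold transfer
      rw [Finset.mul_sum]
      refine Finset.sum_le_sum fun a _ => ?_
      have h1 : H (cons a x) ≤ K * H (cons a y) := by
        refine ih (by omega) _ _ (hxy.cons a) fun i hi => ?_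
        cases i with
        | zero => rfl
        | succ j => exact h j (by omega)
      rw [(hxy.cons a).pot_eq (α := α), mul_left_comm]
      exact mul_le_mul_of_nonneg_left h1 (Real.exp_pos _).le
    rw [hE, hE, mul_left_comm] at hs
    exact le_of_mul_le_mul_left hs hlam

lemma eq_of_sameRing {α β lam : ℝ} {H : Sig → ℝ} (hlam : 0 < lam) (hc : Continuous H)
    (hp : ∀ x, 0 < H x) (hE : ∀ x, transfer α β H x = lam * H x) {x y : Sig}
    (hxy : SameRing x y) : H x = H y := by
  have hle : ∀ x y, SameRing x y → H x ≤ H y := by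
    intro x y hxy
    refine le_of_forall_pos_le_add fun ε hε => ?_
    have hK : 1 < 1 + ε / H y := by linarith [div_pos hε (hp y)]
    obtain ⟨n, hn⟩ := exists_cylinder_ratio hc hp hK
    have := ratio_on_rings hlam hE n hn x y hxy
    have h2 : (1 + ε / H y) * H y = H y + ε := by
      have := (hp y).ne'
      field_simp
    linarith
  refine le_antisymm (hle x y hxy) (hle y x ?_)
  rcases hxy with ⟨hx, hy⟩ | ⟨m, hx, hy⟩ | ⟨m, hx, hy⟩
  · exact Or.inl ⟨hy, hx⟩
  · exact Or.inr (Or.inl ⟨m, hy, hx⟩)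
  · exact Or.inr (Or.inr ⟨m, hy, hx⟩)

/-! ### The scalar recursion along a tower of rings -/

lemma nonneg_of_expanding {lam : ℝ} (hlam : 1 < lam) {z : ℕ → ℝ}
    (hz : ∀ m, z (m + 1) ≤ lam * z m) {l : ℝ} (hl : Tendsto z atTop (nhds l)) (hl0 : 0 ≤ l) :
    0 ≤ z 0 := by
  have h1 : ∀ n, z n ≤ lam ^ n * z 0 := by
    intro n
    induction n with
    | zero => simp
    | succ n ih =>
      calc z (n + 1) ≤ lam * z n := hz n
        _ ≤ lam * (lam ^ n * z 0) := by gcongr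
        _ = lam ^ (n + 1) * z 0 := by ring
  by_contra! hneg
  have h2 : ∀ n, z n ≤ z 0 := fun n => (h1 n).trans <| by
    nlinarith [one_le_pow₀ hlam.le (n := n)]
  linarith [le_of_tendsto' hl h2]

/-- The values `a m` of an eigenfunction on the rings of depth `m + 1` around a fixed point, where
the potential is `-θ·d`. Rescaled to `y m = exp (θ/2^(m+1)) * a m`, the recursion becomes
`lam * y m = y (m+1) + p * exp (θ/2^(m+1))`, whose forcing term is at least `p`, at most
`p * exp (θ/2)`, and at most `p * exp (θ/2^(M+1))` beyond depth `M`. -/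
lemma tower_bounds {θ lam p : ℝ} (hθ : 0 ≤ θ) (hlam : 1 < lam) (hp : 0 < p) {a : ℕ → ℝ}
    (ha : ∀ m, 0 < a m)
    (hrec : ∀ m, lam * a m = Real.exp (-(θ * (1 / 2) ^ (m + 2))) * a (m + 1) + p)
    (hlim : Tendsto a atTop (nhds (p / (lam - 1)))) :
    p / (lam - 1) ≤ Real.exp (θ / 2) * a 0 ∧
    ∀ M : ℕ, Real.exp (θ / 2) * a 0 ≤
      p * (M * Real.exp (θ / 2) + Real.exp (θ * (1 / 2) ^ (M + 1)) / (lam - 1)) := by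
  set y : ℕ → ℝ := fun m => Real.exp (θ * (1 / 2) ^ (m + 1)) * a m with hy
  have hypos : ∀ m, 0 < y m := fun m => mul_pos (Real.exp_pos _) (ha m)
  have hy0 : Real.exp (θ / 2) * a 0 = y 0 := by
    simp only [hy]
    congr 2
    ring
  have hyrec : ∀ m, lam * y m = y (m + 1) + p * Real.exp (θ * (1 / 2) ^ (m + 1)) := by
    intro m
    have e : Real.exp (θ * (1 / 2) ^ (m + 1 + 1)) =
        Real.exp (θ * (1 / 2) ^ (m + 1)) * Real.exp (-(θ * (1 / 2) ^ (m + 2))) := by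
      rw [← Real.exp_add]
      congr 1
      ring
    simp only [hy]
    rw [e]
    linear_combination Real.exp (θ * (1 / 2) ^ (m + 1)) * hrec m
  have hylim : Tendsto y atTop (nhds (p / (lam - 1))) := by
    have h1 : Tendsto (fun m : ℕ => ((1 : ℝ) / 2) ^ (m + 1)) atTop (nhds 0) :=
      (tendsto_pow_atTop_nhds_zero_of_lt_one (by norm_num) (by norm_num)).comp
        (tendsto_add_atTop_nat 1)
    have h2 := (Real.continuous_exp.tendsto _).comp (h1.const_mul θ)
    have h3 := h2.mul hlim
    rw [mul_zero, Real.exp_zero, one_mul] at h3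
    exact h3
  have hs : 0 < lam - 1 := by linarith
  have hfix : lam * (p / (lam - 1)) = p / (lam - 1) + p := by
    field_simp
    ring
  rw [hy0]
  constructor
  · have := nonneg_of_expanding hlam (z := fun m => y m - p / (lam - 1)) (l := 0) (by
      intro m
      have h1 : 1 ≤ Real.exp (θ * (1 / 2) ^ (m + 1)) := Real.one_le_exp (by positivity)
      nlinarith [hyrec m]) (by simpa using hylim.sub_const (p / (lam - 1))) le_rfl
    linarith
  · intro M
    have htail : y M ≤ p * (Real.exp (θ * (1 / 2) ^ (M + 1)) / (lam - 1)) := by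
      set E := Real.exp (θ * (1 / 2) ^ (M + 1)) with hE
      have hE1 : 1 ≤ E := Real.one_le_exp (by positivity)
      have := nonneg_of_expanding hlam (z := fun m => p / (lam - 1) * E - y (m + M))
        (l := p / (lam - 1) * E - p / (lam - 1)) (by
          intro m
          have h1 : Real.exp (θ * (1 / 2) ^ (m + M + 1)) ≤ E := by
            apply Real.exp_le_exp.mpr
            refine mul_le_mul_of_nonneg_left ?_ hθ
            exact pow_le_pow_of_le_one (by norm_num) (by norm_num) (by omega)
          have h2 := hyrec (m + M)
          have h3 : m + 1 + M = m + M + 1 := by omega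
          rw [h3]
          have h4 : lam * (p / (lam - 1) * E) = p / (lam - 1) * E + p * E := by
            linear_combination E * hfix
          nlinarith) ((hylim.comp (tendsto_add_atTop_nat M)).const_sub _) (by
          have : 0 < p / (lam - 1) := div_pos hp hs
          nlinarith)
      simp only [zero_add] at this
      have h5 : p * (E / (lam - 1)) = p / (lam - 1) * E := by ring
      linarith
    have hhead : ∀ m, y 0 ≤ m * (p * Real.exp (θ / 2)) + y m := by
      intro m
      induction m with
      | zero => simp
      | succ m ih =>
        have h1 : Real.exp (θ * (1 / 2) ^ (m + 1)) ≤ Real.exp (θ / 2) := by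
          apply Real.exp_le_exp.mpr
          have : ((1 : ℝ) / 2) ^ (m + 1) ≤ (1 / 2) ^ 1 :=
            pow_le_pow_of_le_one (by norm_num) (by norm_num) (by omega)
          nlinarith
        have h2 : y m ≤ lam * y m := by nlinarith [hypos m]
        push_cast
        nlinarith [hyrec m]
    have := hhead M
    nlinarith

/-! ### The reduced system at fixed `β` -/

/-- The point `a^(m+1) 2^∞`, a representative of the ring `[a^(m+1)*_a]` for `a ∈ {0, 1}`. -/
def ringRep (a : Fin 3) (m : ℕ) : Sig := fun n => if n < m + 1 then a else 2

lemma ringRep_mem {a : Fin 3} (ha : a ≠ 2) (m : ℕ) : ringRep a m ∈ ringSet a (m + 1) := by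
  refine ⟨fun i hi => ?_, ?_⟩
  · simp only [ringRep, if_pos hi]
  · simpa [ringRep] using ha.symm

lemma ringRep_tendsto (a : Fin 3) : Tendsto (ringRep a) atTop (nhds (fun _ => a)) := by
  rw [tendsto_pi_nhds]
  intro i
  refine tendsto_const_nhds.congr' ?_
  filter_upwards [eventually_ge_atTop i] with n hn
  simp only [ringRep]
  rw [if_pos (by omega)]

/-- With `r = H(1^∞)/H(0^∞)` and `s = 1/(e^P - 1)`, the eigenfunction equation reduces to a
two-dimensional system with transition weights `u : 0 → 1`, `v : 1 → 0` and a contribution `t` of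
the excursions to `[2]`. -/
structure Reduced (α β s r u v t : ℝ) : Prop where
  eq_one : (1 - t) * r = u + t
  eq_zero : 1 - t = (v + t) * r
  t_pos : 0 < t
  t_le : t ≤ Real.exp (-(α * β))
  t_le_half : t ≤ 1 / 2
  u_lower : Real.exp (-β) * s ≤ u
  u_upper : ∀ M : ℕ,
    u ≤ Real.exp (-β) * (M * Real.exp (β / 2) + Real.exp (β * (1 / 2) ^ (M + 1)) * s)
  v_lower : Real.exp (-(3 * β)) * s ≤ v
  v_upper : ∀ M : ℕ,
    v ≤ Real.exp (-(3 * β)) *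
      (M * Real.exp (3 * β / 2) + Real.exp (3 * β * (1 / 2) ^ (M + 1)) * s)

lemma exists_reduced {α β P : ℝ} {H : Sig → ℝ} {ν : Measure Sig} (hα : 0 < α) (hβ : 0 < β)
    (h : IsEigenData α β P H ν) :
    ∃ u v t, Reduced α β (1 / (Real.exp P - 1)) (H oneSeq / H zeroSeq) u v t := by
  set lam := Real.exp P with hlamdef
  have hlam : 1 < lam := Real.one_lt_exp_iff.mpr h.P_pos
  have hs : 0 < lam - 1 := by linarith
  have hE := h.eigenFun
  have hring : ∀ {x y : Sig}, SameRing x y → H x = H y :=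
    eq_of_sameRing (by linarith) h.H_cont h.H_pos hE
  set a : ℕ → ℝ := fun m => H (ringRep 0 m) with ha
  set b : ℕ → ℝ := fun m => H (ringRep 1 m) with hb
  set c : ℝ := H (fun _ => 2) with hc
  set A := H zeroSeq with hA
  set B := H oneSeq with hB
  have hApos : 0 < A := h.H_pos _
  have hBpos : 0 < B := h.H_pos _
  have hcpos : 0 < c := h.H_pos _
  have hapos : ∀ m, 0 < a m := fun m => h.H_pos _
  have hbpos : ∀ m, 0 < b m := fun m => h.H_pos _
  have ring0 : ∀ {x : Sig} {m : ℕ}, x ∈ ringSet 0 (m + 1) → H x = a m := fun {x m} hx =>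
    hring (Or.inr (Or.inl ⟨m, hx, ringRep_mem (by decide) m⟩))
  have ring1 : ∀ {x : Sig} {m : ℕ}, x ∈ ringSet 1 (m + 1) → H x = b m := fun {x m} hx =>
    hring (Or.inr (Or.inr ⟨m, hx, ringRep_mem (by decide) m⟩))
  have two : ∀ x : Sig, Real.exp (β * pot α (cons 2 x)) * H (cons 2 x)
      = Real.exp (-(α * β)) * c := by
    intro x
    rw [pot_two (show cons 2 x ∈ cyl 2 from rfl),
      hring (x := cons 2 x) (y := fun _ => 2) (Or.inl ⟨rfl, rfl⟩)]
    congr 2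
    ring
  have zeroRing : ∀ (x : Sig) (m : ℕ), x ∈ ringSet 0 m →
      Real.exp (β * pot α (cons 0 x)) * H (cons 0 x)
        = Real.exp (-(β * (1 / 2) ^ (m + 1))) * a m := by
    intro x m hx
    rw [pot_ring_zero (cons_mem_ring hx), ring0 (cons_mem_ring hx)]
    congr 2
    ring
  have oneRing : ∀ (x : Sig) (m : ℕ), x ∈ ringSet 1 m →
      Real.exp (β * pot α (cons 1 x)) * H (cons 1 x)
        = Real.exp (-(3 * β * (1 / 2) ^ (m + 1))) * b m := by
    intro x m hx
    rw [pot_ring_one (cons_mem_ring hx), ring1 (cons_mem_ring hx)]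
    congr 2
    ring
  have zeroOther : ∀ x : Sig, x 0 ≠ 0 → Real.exp (β * pot α (cons 0 x)) * H (cons 0 x)
      = Real.exp (-(β / 2)) * a 0 := by
    intro x hx
    rw [zeroRing x 0 ⟨fun _ hi => absurd hi (Nat.not_lt_zero _), hx⟩]
    congr 2
    ring
  have oneOther : ∀ x : Sig, x 0 ≠ 1 → Real.exp (β * pot α (cons 1 x)) * H (cons 1 x)
      = Real.exp (-(3 * β / 2)) * b 0 := by
    intro x hx
    rw [oneRing x 0 ⟨fun _ hi => absurd hi (Nat.not_lt_zero _), hx⟩]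
    congr 2
    ring
  have expand : ∀ x, Real.exp (β * pot α (cons 0 x)) * H (cons 0 x)
      + Real.exp (β * pot α (cons 1 x)) * H (cons 1 x)
      + Real.exp (β * pot α (cons 2 x)) * H (cons 2 x) = lam * H x := by
    intro x
    rw [← hE x]
    unfold transfer
    rw [Fin.sum_univ_three]
  set w := Real.exp (-(α * β)) with hw
  have hwpos : 0 < w := Real.exp_pos _
  have hw1 : w ≤ 1 := Real.exp_le_one_iff.mpr (by nlinarith)
  set p := Real.exp (-(3 * β / 2)) * b 0 + w * c with hp
  set q := Real.exp (-(β / 2)) * a 0 + w * c with hq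
  have hppos : 0 < p := by have := hbpos 0; positivity
  have hqpos : 0 < q := by have := hapos 0; positivity
  have eqA : p = (lam - 1) * A := by
    have h1 := expand zeroSeq
    have e : cons 0 zeroSeq = zeroSeq := cons_const 0
    rw [oneOther zeroSeq (by decide), two, e, pot_zeroSeq, mul_zero, Real.exp_zero] at h1
    linarith
  have eqB : q = (lam - 1) * B := by
    have h1 := expand oneSeq
    have e : cons 1 oneSeq = oneSeq := cons_const 1
    rw [zeroOther oneSeq (by decide), two, e, pot_oneSeq, mul_zero, Real.exp_zero] at h1
    linarith
  have eqc : (lam + w) * c = p + q := by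
    have h1 := expand (fun _ => 2)
    rw [zeroOther _ (by decide), oneOther _ (by decide), two] at h1
    linarith
  have reca : ∀ m, lam * a m = Real.exp (-(β * (1 / 2) ^ (m + 2))) * a (m + 1) + p := by
    intro m
    have hm := ringRep_mem (a := 0) (by decide) m
    have h1 := expand (ringRep 0 m)
    rw [zeroRing _ _ hm, oneOther _ (by rw [hm.1 0 m.succ_pos]; decide), two] at h1
    linarith
  have recb : ∀ m, lam * b m = Real.exp (-(3 * β * (1 / 2) ^ (m + 2))) * b (m + 1) + q := by
    intro m
    have hm := ringRep_mem (a := 1) (by decide) m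
    have h1 := expand (ringRep 1 m)
    rw [oneRing _ _ hm, zeroOther _ (by rw [hm.1 0 m.succ_pos]; decide), two] at h1
    linarith
  have lima : Tendsto a atTop (nhds (p / (lam - 1))) := by
    rw [eqA, mul_div_cancel_left₀ _ hs.ne']
    exact (h.H_cont.tendsto _).comp (ringRep_tendsto 0)
  have limb : Tendsto b atTop (nhds (q / (lam - 1))) := by
    rw [eqB, mul_div_cancel_left₀ _ hs.ne']
    exact (h.H_cont.tendsto _).comp (ringRep_tendsto 1)
  obtain ⟨la, ua⟩ := tower_bounds hβ.le hlam hppos hapos reca lima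
  obtain ⟨lb, ub⟩ := tower_bounds (by positivity : 0 ≤ 3 * β) hlam hqpos hbpos recb limb
  have hr : B / A = q / p := by
    rw [eqA, eqB, mul_div_mul_left _ _ hs.ne']
  have ea : Real.exp (-(β / 2)) * a 0 = Real.exp (-β) * (Real.exp (β / 2) * a 0) := by
    rw [← mul_assoc, ← Real.exp_add]
    congr 2
    ring
  have eb : Real.exp (-(3 * β / 2)) * b 0
      = Real.exp (-(3 * β)) * (Real.exp (3 * β / 2) * b 0) := by
    rw [← mul_assoc, ← Real.exp_add]
    congr 2
    ring
  have hlw : 0 < lam + w := by linarith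
  have hct : w * c = w / (lam + w) * (p + q) := by
    rw [← eqc]
    field_simp
  refine ⟨Real.exp (-(β / 2)) * a 0 / p, Real.exp (-(3 * β / 2)) * b 0 / q, w / (lam + w), ?_⟩
  rw [hr]
  constructor
  · have : Real.exp (-(β / 2)) * a 0 = q - w / (lam + w) * (p + q) := by linarith
    rw [this]
    field_simp
    ring
  · have : Real.exp (-(3 * β / 2)) * b 0 = p - w / (lam + w) * (p + q) := by linarith
    rw [this]
    field_simp
    ring
  · positivity
  · exact div_le_self hwpos.le (by linarith)
  · rw [div_le_iff₀ hlw]; linarith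
  · rw [le_div_iff₀ hppos, ea, mul_assoc]
    refine mul_le_mul_of_nonneg_left (le_trans (le_of_eq ?_) la) (Real.exp_pos _).le
    ring
  · intro M
    rw [div_le_iff₀ hppos, ea, mul_assoc]
    refine mul_le_mul_of_nonneg_left ((ua M).trans (le_of_eq ?_)) (Real.exp_pos _).le
    ring
  · rw [le_div_iff₀ hqpos, eb, mul_assoc]
    refine mul_le_mul_of_nonneg_left (le_trans (le_of_eq ?_) lb) (Real.exp_pos _).le
    ring
  · intro M
    rw [div_le_iff₀ hqpos, eb, mul_assoc]
    refine mul_le_mul_of_nonneg_left ((ub M).trans (le_of_eq ?_)) (Real.exp_pos _).le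
    ring

/-! ### Asymptotics of the reduced system -/

/-- The product of the two equations gives `(u + t)(v + t) = (1 - t)²`, hence `s ≤ e^{2β}`. Then
`v + t` is at most of order `e^{-β}`: this is where `α > 1` enters. So `r` is at least of order
`e^β`, which in turn forces `u`, hence `s`, to be large. -/
lemma Reduced.bounds {α β s r u v t : ℝ} (h : Reduced α β s r u v t) (hα : 1 < α) (hβ : 0 ≤ β)
    (hs : 0 < s) (hr : 0 < r) {ε : ℝ} (hε : 0 < ε) {M : ℕ} (hM : 3 * (1 / 2 : ℝ) ^ (M + 1) ≤ ε) :
    s ≤ Real.exp (2 * β) ∧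
    Real.exp ((1 - ε) * β) ≤ 2 * (M + 2) * r ∧
    r ≤ 2 * (M + 2) * Real.exp ((1 + ε) * β) ∧
    (8 * (M + 2) * (M + 1) ≤ Real.exp ((1 - ε) * β) →
      Real.exp ((2 - 2 * ε) * β) ≤ 8 * (M + 2) * s) := by
  have hM0 : (0 : ℝ) ≤ M := Nat.cast_nonneg M
  have hpow : (0 : ℝ) < (1 / 2) ^ (M + 1) := by positivity
  have ht := h.t_pos
  have hu : 0 < u := lt_of_lt_of_le (by positivity) h.u_lower
  have hv : 0 < v := lt_of_lt_of_le (by positivity) h.v_lower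
  have hprod : (u + t) * (v + t) = (1 - t) * (1 - t) := by
    linear_combination (-(v + t)) * h.eq_one - (1 - t) * h.eq_zero
  have hsle : s ≤ Real.exp (2 * β) := by
    have h1 : (Real.exp (-β) * s) * (Real.exp (-(3 * β)) * s) ≤ u * v :=
      mul_le_mul h.u_lower h.v_lower (by positivity) hu.le
    have h2 : u * v ≤ 1 := by nlinarith [h.t_le_half, mul_pos hu ht, mul_pos hv ht, mul_pos ht ht]
    have h3 : (Real.exp (-β) * s) * (Real.exp (-(3 * β)) * s) = (Real.exp (-(2 * β)) * s) ^ 2 := by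
      have e1 : Real.exp (-β) * Real.exp (-(3 * β))
          = Real.exp (-(2 * β)) * Real.exp (-(2 * β)) := by
        rw [← Real.exp_add, ← Real.exp_add]
        congr 1
        ring
      linear_combination s ^ 2 * e1
    have h4 : Real.exp (-(2 * β)) * s ≤ 1 := by
      have h5 : 0 < Real.exp (-(2 * β)) * s := by positivity
      nlinarith
    rw [Real.exp_neg, inv_mul_le_iff₀ (Real.exp_pos _), mul_one] at h4
    exact h4
  have hvt : v + t ≤ (M + 2) * Real.exp (-((1 - ε) * β)) := by
    have h1 := h.v_upper M
    have e1 : Real.exp (-(3 * β)) * Real.exp (3 * β / 2) ≤ Real.exp (-((1 - ε) * β)) := by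
      rw [← Real.exp_add]
      exact Real.exp_le_exp.mpr (by nlinarith)
    have e2 : Real.exp (-(3 * β)) * (Real.exp (3 * β * (1 / 2) ^ (M + 1)) * Real.exp (2 * β))
        ≤ Real.exp (-((1 - ε) * β)) := by
      rw [← Real.exp_add, ← Real.exp_add]
      exact Real.exp_le_exp.mpr (by nlinarith)
    have e3 : t ≤ Real.exp (-((1 - ε) * β)) :=
      h.t_le.trans (Real.exp_le_exp.mpr (by nlinarith))
    have e4 : Real.exp (-(3 * β)) * (Real.exp (3 * β * (1 / 2) ^ (M + 1)) * s)
        ≤ Real.exp (-(3 * β)) * (Real.exp (3 * β * (1 / 2) ^ (M + 1)) * Real.exp (2 * β)) := by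
      gcongr
    nlinarith
  have hut : u + t ≤ (M + 1) + Real.exp (-((1 - ε) * β)) * s := by
    have h1 := h.u_upper M
    have e1 : Real.exp (-β) * Real.exp (β / 2) ≤ 1 := by
      rw [← Real.exp_add]
      exact Real.exp_le_one_iff.mpr (by linarith)
    have e2 : Real.exp (-β) * Real.exp (β * (1 / 2) ^ (M + 1)) ≤ Real.exp (-((1 - ε) * β)) := by
      rw [← Real.exp_add]
      exact Real.exp_le_exp.mpr (by nlinarith)
    have e3 := mul_le_mul_of_nonneg_right e2 hs.le
    nlinarith [h.t_le_half]
  have einv : Real.exp ((1 - ε) * β) * Real.exp (-((1 - ε) * β)) = 1 := by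
    rw [← Real.exp_add, add_neg_cancel, Real.exp_zero]
  have hrlow : Real.exp ((1 - ε) * β) ≤ 2 * (M + 2) * r := by
    have h1 : 1 ≤ 2 * ((M + 2) * Real.exp (-((1 - ε) * β))) * r := by
      have := mul_le_mul_of_nonneg_right hvt hr.le
      nlinarith [h.eq_zero, h.t_le_half]
    have h2 := mul_le_mul_of_nonneg_left h1 (Real.exp_pos ((1 - ε) * β)).le
    calc Real.exp ((1 - ε) * β) ≤ _ := by simpa using h2
      _ = 2 * (M + 2) * r * (Real.exp ((1 - ε) * β) * Real.exp (-((1 - ε) * β))) := by ring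
      _ = 2 * (M + 2) * r := by rw [einv, mul_one]
  have hrut : r ≤ 2 * (u + t) := by nlinarith [h.eq_one, h.t_le_half]
  refine ⟨hsle, hrlow, ?_, fun hlarge => ?_⟩
  · have e1 : Real.exp (-((1 - ε) * β)) * s ≤ Real.exp ((1 + ε) * β) := by
      calc _ ≤ Real.exp (-((1 - ε) * β)) * Real.exp (2 * β) := by gcongr
        _ = Real.exp ((1 + ε) * β) := by
          rw [← Real.exp_add]
          congr 1
          ring
    have e2 : 1 ≤ Real.exp ((1 + ε) * β) := Real.one_le_exp (by positivity)
    nlinarith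
  · have e0 : Real.exp ((2 - 2 * ε) * β) = Real.exp ((1 - ε) * β) * Real.exp ((1 - ε) * β) := by
      rw [← Real.exp_add]
      congr 1
      ring
    set X := Real.exp ((1 - ε) * β) with hX
    have hXpos : 0 < X := Real.exp_pos _
    have h1 : X ≤ 8 * (M + 2) * (Real.exp (-((1 - ε) * β)) * s) := by
      have : X ≤ 4 * (M + 2) * (M + 1 + Real.exp (-((1 - ε) * β)) * s) := by
        calc X ≤ 2 * (M + 2) * r := hrlow
          _ ≤ 2 * (M + 2) * (2 * (M + 1 + Real.exp (-((1 - ε) * β)) * s)) := by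
            gcongr
            linarith
          _ = _ := by ring
      nlinarith
    rw [e0]
    calc X * X ≤ X * (8 * (M + 2) * (Real.exp (-((1 - ε) * β)) * s)) := by gcongr
      _ = 8 * (M + 2) * s * (X * Real.exp (-((1 - ε) * β))) := by ring
      _ = 8 * (M + 2) * s := by rw [einv, mul_one]

lemma tendsto_rate {f : ℝ → ℝ} {L : ℝ}
    (h : ∀ ε : ℝ, 0 < ε → ε < 1 → ∃ C : ℝ, ∀ᶠ β in atTop, |f β - L * β| ≤ 2 * ε * β + C) :
    Tendsto (fun β => (1 / β) * f β) atTop (nhds L) := by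
  rw [Metric.tendsto_nhds]
  intro δ hδ
  obtain ⟨C, hC⟩ := h (min (δ / 4) (1 / 2)) (by positivity)
    (lt_of_le_of_lt (min_le_right _ _) (by norm_num))
  filter_upwards [hC, eventually_gt_atTop 0, eventually_gt_atTop (2 * C / δ)] with β h1 h2 h3
  rw [div_lt_iff₀ hδ] at h3
  have h4 : (1 / β) * f β - L = (f β - L * β) / β := by field_simp
  rw [Real.dist_eq, h4, abs_div, abs_of_pos h2, div_lt_iff₀ h2]
  have h5 : min (δ / 4) (1 / 2) ≤ δ / 4 := min_le_left _ _
  nlinarith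

lemma exists_depth {ε : ℝ} (hε : 0 < ε) : ∃ M : ℕ, 3 * (1 / 2 : ℝ) ^ (M + 1) ≤ ε := by
  obtain ⟨n, hn⟩ := exists_pow_lt_of_lt_one (show 0 < ε / 3 by positivity)
    (show (1 / 2 : ℝ) < 1 by norm_num)
  refine ⟨n, ?_⟩
  have : (1 / 2 : ℝ) ^ (n + 1) ≤ (1 / 2) ^ n :=
    pow_le_pow_of_le_one (by norm_num) (by norm_num) (by omega)
  linarith

lemma log_ratio_rate {α : ℝ} (hα : 1 < α) {P : ℝ → ℝ} {H : ℝ → Sig → ℝ} {ν : ℝ → Measure Sig}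
    (hE : ∀ β > (0 : ℝ), IsEigenData α β (P β) (H β) (ν β)) :
    Tendsto (fun β => (1 / β) * Real.log (H β oneSeq / H β zeroSeq)) atTop (nhds 1) := by
  refine tendsto_rate fun ε hε _ => ?_
  obtain ⟨M, hM⟩ := exists_depth hε
  refine ⟨Real.log (2 * (M + 2)), ?_⟩
  filter_upwards [eventually_gt_atTop 0] with β hβ
  have hD := hE β hβ
  have hr : 0 < H β oneSeq / H β zeroSeq := div_pos (hD.H_pos _) (hD.H_pos _)
  have hs : 0 < 1 / (Real.exp (P β) - 1) :=
    one_div_pos.mpr (sub_pos.mpr (Real.one_lt_exp_iff.mpr hD.P_pos))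
  obtain ⟨u, v, t, hred⟩ := exists_reduced (by linarith) hβ hD
  obtain ⟨-, h1, h2, -⟩ := hred.bounds hα hβ.le hs hr hε hM
  have hK : (0 : ℝ) < 2 * (M + 2) := by positivity
  have l1 := Real.log_le_log (Real.exp_pos _) h1
  have l2 := Real.log_le_log hr h2
  rw [Real.log_exp, Real.log_mul hK.ne' hr.ne'] at l1
  rw [Real.log_mul hK.ne' (Real.exp_pos _).ne', Real.log_exp] at l2
  rw [abs_le]
  constructor <;> nlinarith

lemma log_pressure_rate {α : ℝ} (hα : 1 < α) {P : ℝ → ℝ} {H : ℝ → Sig → ℝ}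
    {ν : ℝ → Measure Sig} (hE : ∀ β > (0 : ℝ), IsEigenData α β (P β) (H β) (ν β)) :
    Tendsto (fun β => (1 / β) * Real.log (P β)) atTop (nhds (-2)) := by
  refine tendsto_rate fun ε hε hε1 => ?_
  obtain ⟨M, hM⟩ := exists_depth hε
  set K : ℝ := 8 * (M + 2) with hK
  have hKpos : 0 < K := by positivity
  have hlarge : ∀ᶠ β : ℝ in atTop, K * (M + 1) ≤ Real.exp ((1 - ε) * β) :=
    (Real.tendsto_exp_atTop.comp
      (tendsto_id.const_mul_atTop (show 0 < 1 - ε by linarith))).eventually_ge_atTop _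
  refine ⟨Real.log (1 + K), ?_⟩
  filter_upwards [eventually_gt_atTop 0, hlarge] with β hβ hL
  have hD := hE β hβ
  have hP := hD.P_pos
  have hr : 0 < H β oneSeq / H β zeroSeq := div_pos (hD.H_pos _) (hD.H_pos _)
  have hlam : 1 < Real.exp (P β) := Real.one_lt_exp_iff.mpr hP
  have hs : 0 < 1 / (Real.exp (P β) - 1) := one_div_pos.mpr (sub_pos.mpr hlam)
  obtain ⟨u, v, t, hred⟩ := exists_reduced (by linarith) hβ hD
  obtain ⟨h1, -, -, h4⟩ := hred.bounds hα hβ.le hs hr hε hM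
  have h4 := h4 hL
  set d := Real.exp (P β) - 1 with hd
  have hdpos : 0 < d := sub_pos.mpr hlam
  have hPd : P β ≤ d := by linarith [Real.add_one_le_exp (P β)]
  -- `d` stays bounded by `K`, so that `P = log (1 + d)` and `d` are comparable.
  have hdK : d ≤ K := by
    have e : 1 ≤ Real.exp ((2 - 2 * ε) * β) := Real.one_le_exp (by nlinarith)
    have h5 := e.trans h4
    rw [mul_one_div, le_div_iff₀ hdpos] at h5
    linarith
  have hdP : d ≤ (1 + K) * P β := by
    have e1 : Real.exp (P β) * Real.exp (-P β) = 1 := by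
      rw [← Real.exp_add, add_neg_cancel, Real.exp_zero]
    have e2 := Real.add_one_le_exp (-P β)
    have e3 : Real.exp (P β) = 1 + d := by rw [hd]; ring
    rw [e3] at e1
    have e4 := mul_le_mul_of_nonneg_left e2 (show 0 ≤ 1 + d by linarith)
    nlinarith
  have l1 := Real.log_le_log hs h1
  have l2 := Real.log_le_log (Real.exp_pos _) h4
  have l3 := Real.log_le_log hP hPd
  have l4 := Real.log_le_log hdpos hdP
  rw [Real.log_exp, one_div, Real.log_inv] at l1
  rw [Real.log_exp, Real.log_mul hKpos.ne' hs.ne', one_div, Real.log_inv] at l2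
  rw [Real.log_mul (by positivity) hP.ne'] at l4
  have l5 : Real.log K ≤ Real.log (1 + K) := Real.log_le_log hKpos (by linarith)
  rw [abs_le]
  constructor <;> nlinarith

/-- For `α > 1`: `(1/β)·log P(β) → −2`, and any uniform limit `V` of `(1/β_j)·log H_{β_j}`
satisfies `V(1^∞) = V(0^∞) + 1`. -/
theorem pressure_and_subaction_alpha_gt_one (α : ℝ) (hα : 1 < α)
    (P : ℝ → ℝ) (H : ℝ → Sig → ℝ) (ν : ℝ → Measure Sig)
    (hE : ∀ β > (0 : ℝ), IsEigenData α β (P β) (H β) (ν β)) :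
    Tendsto (fun β => (1 / β) * Real.log (P β)) atTop (nhds (-2)) ∧
    ∀ (βj : ℕ → ℝ) (V : Sig → ℝ),
      (∀ j, 0 < βj j) → Tendsto βj atTop atTop →
      TendstoUniformly (fun j x => (1 / βj j) * Real.log (H (βj j) x)) V atTop →
      V oneSeq = V zeroSeq + 1 := by
  refine ⟨log_pressure_rate hα hE, fun βj V hpos hβ hV => ?_⟩
  have h1 := (hV.tendsto_at oneSeq).sub (hV.tendsto_at zeroSeq)
  have h2 := (log_ratio_rate hα hE).comp hβ
  have h3 : V oneSeq - V zeroSeq = 1 := by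
    refine tendsto_nhds_unique h1 (h2.congr fun j => ?_)
    have hD := hE _ (hpos j)
    simp only [Function.comp_apply]
    rw [Real.log_div (hD.H_pos _).ne' (hD.H_pos _).ne', mul_sub]
  linarith

end
end

section
/- For every real Z with 0 < Z < log 2 and every real β > 2·log 2, one has |F(Z,β) − 1/Z| ≤ (β·e^{β/2} / (2·log 2)) · (2 + Σ_{n=1}^∞ (Z/log 2)^n). -/
/-!
Write `t_k = e^{-kZ}` and `b = β/2`, so that `F(Z,β) = Σ t_k e^{b/2^k}`, and compare with the
geometric series `Σ t_k = 1/(1 - e^{-Z})`, which lies in `[1/Z, 1 + 1/Z]`.  Termwise,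
`t_k ≤ t_k e^{b/2^k} ≤ t_k + (e^b - 1)/2^k`, the upper bound being Bernoulli's inequality for
`e^b = (e^{b/2^k})^{2^k}`.  Summing gives `0 ≤ F(Z,β) - 1/Z ≤ 1 + 2(e^b - 1) ≤ 2 e^b`, which is at
most the claimed bound because `b > log 2` and the series on the right is nonnegative.
-/

open MeasureTheory Filter Topology

noncomputable section

/-- A form of convexity of `exp` at dyadic points, obtained from Bernoulli's inequality. -/
lemma exp_half_div_two_pow_le (β : ℝ) (k : ℕ) :
    Real.exp (β / 2 ^ (k + 1)) ≤ 1 + (Real.exp (β / 2) - 1) * (1 / 2) ^ k := by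
  set x := Real.exp (β / 2 ^ (k + 1)) with hx
  have hpow : x ^ (2 ^ k) = Real.exp (β / 2) := by
    rw [hx, ← Real.exp_nat_mul]
    congr 1
    push_cast
    field_simp
    ring
  have hx0 : 0 < x := Real.exp_pos _
  have h := one_add_mul_le_pow (a := x - 1) (by linarith) (2 ^ k)
  rw [add_sub_cancel, hpow] at h
  push_cast at h
  have h2 : (0 : ℝ) < 2 ^ k := by positivity
  have h3 : x - 1 ≤ (Real.exp (β / 2) - 1) / 2 ^ k := by
    rw [le_div_iff₀ h2]
    linarith
  have h4 : (Real.exp (β / 2) - 1) * (1 / 2) ^ k = (Real.exp (β / 2) - 1) / 2 ^ k := by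
    rw [one_div_pow]
    ring
  linarith

lemma hasSum_exp_neg_nat_mul {Z : ℝ} (hZ : 0 < Z) :
    HasSum (fun k : ℕ => Real.exp (-(k : ℝ) * Z)) (1 - Real.exp (-Z))⁻¹ := by
  have h := hasSum_geometric_of_lt_one (Real.exp_pos (-Z)).le
    (Real.exp_lt_one_iff.mpr (by linarith : -Z < 0))
  convert h using 2 with k
  rw [← Real.exp_nat_mul]
  congr 1
  ring

lemma one_div_le_inv_one_sub_exp_neg {Z : ℝ} (hZ : 0 < Z) :
    1 / Z ≤ (1 - Real.exp (-Z))⁻¹ := by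
  rw [one_div]
  have h1 : Real.exp (-Z) < 1 := Real.exp_lt_one_iff.mpr (by linarith)
  have h2 := Real.add_one_le_exp (-Z)
  exact inv_anti₀ (by linarith) (by linarith)

lemma inv_one_sub_exp_neg_le {Z : ℝ} (hZ : 0 < Z) :
    (1 - Real.exp (-Z))⁻¹ ≤ 1 + 1 / Z := by
  have h2 := Real.add_one_le_exp Z
  -- `1 + 1/Z` is the inverse of `Z/(1+Z) = 1 - 1/(1+Z)`.
  have h3 : 1 + 1 / Z = (1 - (Z + 1)⁻¹)⁻¹ := by
    have : (1 : ℝ) - (Z + 1)⁻¹ = Z / (Z + 1) := by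
      field_simp
      ring
    rw [this, inv_div]
    field_simp
  have h4 : Real.exp (-Z) ≤ (Z + 1)⁻¹ := by
    rw [Real.exp_neg]
    exact inv_anti₀ (by linarith) h2
  have h5 : (Z + 1)⁻¹ < 1 := inv_lt_one_of_one_lt₀ (by linarith)
  rw [h3]
  exact inv_anti₀ (by linarith) (by linarith)

/-- Estimate for `F(Z,β)`: for `0 < Z < log 2` and `β > 2 log 2`,
`|F(Z,β) − 1/Z| ≤ (β e^{β/2}/(2 log 2))·(2 + Σ_{n≥1} (Z/log 2)^n)`. -/
theorem Ffun_estimate (Z β : ℝ) (hZ0 : 0 < Z) (hZ1 : Z < Real.log 2)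
    (hβ : 2 * Real.log 2 < β) :
    |Ffun Z β - 1 / Z| ≤
      (β * Real.exp (β / 2) / (2 * Real.log 2)) *
        (2 + ∑' n : ℕ, (Z / Real.log 2) ^ (n + 1)) := by
  have hlog : 0 < Real.log 2 := Real.log_pos one_lt_two
  set E := Real.exp (β / 2) with hE
  have hE1 : 1 ≤ E := Real.one_le_exp (by linarith)
  have hgeo := hasSum_exp_neg_nat_mul hZ0
  have hmaj : HasSum (fun k : ℕ => Real.exp (-(k : ℝ) * Z) + (E - 1) * (1 / 2) ^ k)
      ((1 - Real.exp (-Z))⁻¹ + (E - 1) * 2) :=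
    hgeo.add (hasSum_geometric_two.mul_left _)
  have hlow : ∀ k : ℕ, Real.exp (-(k : ℝ) * Z) ≤
      Real.exp (-(k : ℝ) * Z) * Real.exp (β / 2 ^ (k + 1)) := fun k =>
    le_mul_of_one_le_right (Real.exp_pos _).le
      (Real.one_le_exp (div_nonneg (by linarith) (by positivity)))
  have hupp : ∀ k : ℕ, Real.exp (-(k : ℝ) * Z) * Real.exp (β / 2 ^ (k + 1)) ≤
      Real.exp (-(k : ℝ) * Z) + (E - 1) * (1 / 2) ^ k := by
    intro k
    have h1 : Real.exp (-(k : ℝ) * Z) ≤ 1 := by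
      rw [Real.exp_le_one_iff, neg_mul]
      exact neg_nonpos.mpr (by positivity)
    have h2 : 0 ≤ (E - 1) * (1 / 2 : ℝ) ^ k := mul_nonneg (by linarith) (by positivity)
    calc Real.exp (-(k : ℝ) * Z) * Real.exp (β / 2 ^ (k + 1))
        ≤ Real.exp (-(k : ℝ) * Z) * (1 + (E - 1) * (1 / 2) ^ k) :=
          mul_le_mul_of_nonneg_left (exp_half_div_two_pow_le β k) (Real.exp_pos _).le
      _ = Real.exp (-(k : ℝ) * Z) + Real.exp (-(k : ℝ) * Z) * ((E - 1) * (1 / 2) ^ k) := by ring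
      _ ≤ Real.exp (-(k : ℝ) * Z) + (E - 1) * (1 / 2) ^ k := by
          have := mul_le_of_le_one_left h2 h1
          linarith
  have hsum : HasSum (fun k : ℕ => Real.exp (-(k : ℝ) * Z) * Real.exp (β / 2 ^ (k + 1)))
      (Ffun Z β) :=
    (Summable.of_nonneg_of_le (fun k => by positivity) hupp hmaj.summable).hasSum
  have hF1 := hasSum_le hlow hgeo hsum
  have hF2 := hasSum_le hupp hsum hmaj
  have hZ2 := one_div_le_inv_one_sub_exp_neg hZ0
  have hZ3 := inv_one_sub_exp_neg_le hZ0
  have hT : 0 ≤ ∑' n : ℕ, (Z / Real.log 2) ^ (n + 1) := tsum_nonneg fun n => by positivity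
  have hC : E ≤ β * E / (2 * Real.log 2) := by
    rw [le_div_iff₀ (by linarith), mul_comm]
    exact mul_le_mul_of_nonneg_right hβ.le (by linarith)
  rw [abs_of_nonneg (by linarith)]
  calc Ffun Z β - 1 / Z ≤ E * 2 := by linarith
    _ ≤ _ := mul_le_mul hC (by linarith) (by norm_num) (by linarith)

end
end
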